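/- Let 0 < α < 1. There exists a constant C > 0 (depending only on α) such that for every λ > 0 and all 0 < s < t, |t^{α-1} E_{α,α}(-λ t^α) - s^{α-1} E_{α,α}(-λ s^α)| ≤ C ∫_s^t r^{α-2}/(1 + λ r^α) dr. -/

import Mathlib

open Real intervalIntegral

/-- The two-parameter Mittag-Leffler function (real arguments),
with the convention `1/Γ = 0` at the poles of `Γ` (as in Mathlib's `Real.Gamma`). -/
noncomputable def mittagLeffler (α β x : ℝ) : ℝ :=
  ∑' k : ℕ, x ^ k / Real.Gamma ((k : ℝ) * α + β)

open MeasureTheory Set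

lemma ml_beta {a b t : ℝ} (ha : 0 < a) (hb : 0 < b) (ht : 0 < t) :
    ∫ s in (0:ℝ)..t, s ^ (a - 1) * (t - s) ^ (b - 1)
      = t ^ (a + b - 1) * (Gamma a * Gamma b / Gamma (a + b)) := by
  have h := Complex.betaIntegral_scaled (a : ℂ) (b : ℂ) ht
  rw [Complex.betaIntegral_eq_Gamma_mul_div _ _ (by simpa) (by simpa)] at h
  have e : (∫ x in (0:ℝ)..t, (x : ℂ) ^ ((a : ℂ) - 1) * ((t : ℂ) - x) ^ ((b : ℂ) - 1))
      = ((∫ s in (0:ℝ)..t, s ^ (a - 1) * (t - s) ^ (b - 1) : ℝ) : ℂ) := by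
    rw [← intervalIntegral.integral_ofReal]
    apply intervalIntegral.integral_congr
    intro x hx
    rw [uIcc_of_le ht.le] at hx
    simp only
    push_cast
    rw [Complex.ofReal_cpow hx.1, Complex.ofReal_cpow (by linarith [hx.2])]
    push_cast
    rfl
  rw [e] at h
  have e2 : (t : ℂ) ^ ((a : ℂ) + b - 1) = ((t ^ (a + b - 1) : ℝ) : ℂ) := by
    rw [Complex.ofReal_cpow ht.le]; push_cast; rfl
  rw [e2, ← Complex.ofReal_add, Complex.Gamma_ofReal, Complex.Gamma_ofReal,
    Complex.Gamma_ofReal] at h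
  exact_mod_cast h

lemma ml_beta_int {a b t : ℝ} (ha : 0 < a) (hb : 0 < b) (ht : 0 < t) :
    IntervalIntegrable (fun s => s ^ (a - 1) * (t - s) ^ (b - 1)) volume 0 t := by
  apply intervalIntegral.intervalIntegrable_of_integral_ne_zero
  rw [ml_beta ha hb ht]
  have := Gamma_pos_of_pos ha
  have := Gamma_pos_of_pos hb
  have := Gamma_pos_of_pos (add_pos ha hb)
  positivity

lemma ml_gamma_lower {s R : ℝ} (hs : 1 ≤ s) (hR : 0 < R) :
    R ^ (s - 1) * rexp (-R) ≤ Gamma s := by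
  rw [Real.Gamma_eq_integral (by linarith)]
  have hi := Real.GammaIntegral_convergent (s := s) (by linarith)
  calc R ^ (s - 1) * rexp (-R) = ∫ x in Ioi R, R ^ (s - 1) * rexp (-x) := by
        rw [MeasureTheory.integral_const_mul, integral_exp_neg_Ioi]
    _ ≤ ∫ x in Ioi R, rexp (-x) * x ^ (s - 1) := by
        apply setIntegral_mono_on _ (hi.mono_set (Ioi_subset_Ioi hR.le)) measurableSet_Ioi
        · intro x hx
          rw [mul_comm]
          have : R ^ (s - 1) ≤ x ^ (s - 1) :=
            Real.rpow_le_rpow hR.le (le_of_lt hx) (by linarith)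
          gcongr
        · exact (integrableOn_exp_neg_Ioi R).const_mul _
    _ ≤ _ := by
        apply setIntegral_mono_set hi
        · filter_upwards [ae_restrict_mem measurableSet_Ioi] with x hx
          have : 0 < x := hx
          simp only [Pi.zero_apply]
          positivity
        · exact (Ioi_subset_Ioi hR.le).eventuallyLE

lemma ml_summable0 {α x : ℝ} (β : ℝ) (hα : 0 < α) (hβ : 0 < β) (hx : 0 ≤ x) :
    Summable (fun k : ℕ => x ^ k / Gamma (k * α + β)) := by
  set R : ℝ := (2 * (x + 1)) ^ (1 / α) with hR
  have hRp : 0 < R := by positivity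
  have hRa : R ^ α = 2 * (x + 1) := by
    rw [hR, ← Real.rpow_mul (by positivity)]; field_simp; simp
  obtain ⟨N, hN⟩ := exists_nat_gt (1 / α)
  have hg : Summable (fun k : ℕ => (R ^ (β - 1) * rexp (-R))⁻¹ * (1 / 2 : ℝ) ^ k) :=
    (summable_geometric_of_lt_one (by norm_num) (by norm_num)).mul_left _
  refine Summable.of_norm_bounded_eventually_nat hg ?_
  filter_upwards [Filter.eventually_ge_atTop N] with k hk
  have hk1 : 1 ≤ k * α + β := by
    have : (N : ℝ) ≤ k := by exact_mod_cast hk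
    have : 1 < N * α := by rwa [div_lt_iff₀ hα] at hN
    nlinarith
  have hG := ml_gamma_lower hk1 hRp
  have e : R ^ (k * α + β - 1) = (2 * (x + 1)) ^ k * R ^ (β - 1) := by
    rw [← hRa, ← Real.rpow_mul_natCast hRp.le, ← Real.rpow_add hRp]
    ring_nf
  rw [e] at hG
  have hGp : 0 < Gamma (k * α + β) := Gamma_pos_of_pos (by positivity)
  rw [Real.norm_of_nonneg (by positivity), div_le_iff₀ hGp]
  calc x ^ k ≤ (x + 1) ^ k := by gcongr; linarith
    _ = (R ^ (β - 1) * rexp (-R))⁻¹ * (1 / 2 : ℝ) ^ k * ((2 * (x + 1)) ^ k * R ^ (β - 1) * rexp (-R)) := by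
        rw [mul_pow, one_div, inv_pow]; field_simp
    _ ≤ _ := by gcongr

lemma ml_summable1 {α x : ℝ} (β : ℝ) (hα : 0 < α) (hβ : 0 < β) (hx : 0 ≤ x) :
    Summable (fun k : ℕ => ((k : ℝ) + 1) * x ^ k / Gamma (k * α + β)) := by
  refine Summable.of_nonneg_of_le (fun k => ?_) (fun k => ?_)
    (ml_summable0 β hα hβ (x := 2 * x) (by positivity))
  · have hGp : 0 < Gamma (k * α + β) := Gamma_pos_of_pos (by positivity)
    positivity
  · have hGp : 0 < Gamma (k * α + β) := Gamma_pos_of_pos (by positivity)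
    rw [mul_pow]
    have : (k : ℝ) + 1 ≤ 2 ^ k := by exact_mod_cast Nat.lt_two_pow_self
    gcongr

lemma ml_hasDerivAt {α : ℝ} (hα : 0 < α) (x : ℝ) :
    HasDerivAt (mittagLeffler α α)
      (∑' k : ℕ, (k : ℝ) * x ^ (k - 1) / Gamma (k * α + α)) x := by
  set R : ℝ := |x| + 1
  have hx : x ∈ Ioo (-R) R := by
    constructor
    · have := neg_abs_le x; simp only [R]; linarith
    · have := le_abs_self x; simp only [R]; linarith
  have hR1 : 1 ≤ R := by simp [R]
  unfold mittagLeffler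
  refine hasDerivAt_tsum_of_isPreconnected (t := Ioo (-R) R)
    (ml_summable1 α hα hα (x := R) (by linarith)) isOpen_Ioo isPreconnected_Ioo
    (g := fun (k : ℕ) y => y ^ k / Gamma (k * α + α))
    (g' := fun (k : ℕ) y => (k : ℝ) * y ^ (k - 1) / Gamma (k * α + α)) ?_ ?_ hx ?_ hx
  · intro n y hy
    exact (hasDerivAt_pow n y).div_const _
  · intro n y hy
    have hGp : 0 < Gamma (n * α + α) := Gamma_pos_of_pos (by positivity)
    rw [norm_div, Real.norm_of_nonneg hGp.le, norm_mul, norm_pow,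
      Real.norm_of_nonneg (Nat.cast_nonneg n)]
    have hy' : ‖y‖ ≤ R := by
      rw [Real.norm_eq_abs]; exact abs_le.2 ⟨hy.1.le, hy.2.le⟩
    have : ‖y‖ ^ (n - 1) ≤ R ^ n :=
      (pow_le_pow_left₀ (norm_nonneg _) hy' _).trans (pow_le_pow_right₀ hR1 (by omega))
    gcongr
    linarith
  · refine Summable.of_norm ?_
    refine (ml_summable0 α hα hα (abs_nonneg x)).congr fun k => ?_
    have hGp : 0 < Gamma (k * α + α) := Gamma_pos_of_pos (by positivity)
    simp [abs_of_pos hGp]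

lemma ml_continuous {α : ℝ} (hα : 0 < α) : Continuous (mittagLeffler α α) :=
  continuous_iff_continuousAt.2 fun x => (ml_hasDerivAt hα x).continuousAt

lemma ml_pw {α t : ℝ} (c : ℝ) (ht : 0 < t) (k : ℕ) :
    t ^ (k * α + c) = t ^ c * (t ^ α) ^ k := by
  rw [← Real.rpow_mul_natCast ht.le, ← Real.rpow_add ht]
  ring_nf

lemma ml_conv {ι : Type} [Countable ι] (d a b : ι → ℝ) {t : ℝ} (ht : 0 < t)
    (ha : ∀ i, 0 < a i) (hb : ∀ i, 0 < b i)
    (hs : Summable fun i => |d i| * (t ^ (a i + b i - 1) *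
      (Gamma (a i) * Gamma (b i) / Gamma (a i + b i)))) :
    ∫ s in Ioo 0 t, ∑' i, d i * (s ^ (a i - 1) * (t - s) ^ (b i - 1))
     = ∑' i, d i * (t ^ (a i + b i - 1) *
      (Gamma (a i) * Gamma (b i) / Gamma (a i + b i))) := by
  have hI : ∀ i, IntegrableOn (fun s => s ^ (a i - 1) * (t - s) ^ (b i - 1)) (Ioo 0 t) := fun i =>
    (intervalIntegrable_iff_integrableOn_Ioo_of_le ht.le).1 (ml_beta_int (ha i) (hb i) ht)
  have hv : ∀ i, ∫ s in Ioo 0 t, s ^ (a i - 1) * (t - s) ^ (b i - 1) = t ^ (a i + b i - 1) *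
      (Gamma (a i) * Gamma (b i) / Gamma (a i + b i)) := fun i => by
    rw [← ml_beta (ha i) (hb i) ht, intervalIntegral.integral_of_le ht.le,
      MeasureTheory.integral_Ioc_eq_integral_Ioo]
  rw [← MeasureTheory.integral_tsum_of_summable_integral_norm]
  · congr 1
    ext i
    rw [MeasureTheory.integral_const_mul, hv]
  · exact fun i => (hI i).const_mul _
  · refine hs.congr fun i => ?_
    rw [← hv i, ← MeasureTheory.integral_const_mul]
    refine setIntegral_congr_fun measurableSet_Ioo fun s hs => ?_
    have h1 : 0 < s := hs.1
    have h2 : 0 < t - s := sub_pos.2 hs.2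
    simp only [norm_mul, Real.norm_eq_abs]
    rw [abs_of_pos (Real.rpow_pos_of_pos h1 _), abs_of_pos (Real.rpow_pos_of_pos h2 _)]

noncomputable def mlF (α lam t : ℝ) : ℝ := t ^ (α - 1) * mittagLeffler α α (-lam * t ^ α)

noncomputable def mlD (α lam t : ℝ) : ℝ :=
  ∑' k : ℕ, ((k : ℝ) + 1) * (-lam * t ^ α) ^ k / Gamma (k * α + 2 * α)

lemma ml_gp {α : ℝ} (hα : 0 < α) (k : ℕ) {β : ℝ} (hβ : 0 < β) : 0 < Gamma (k * α + β) :=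
  Gamma_pos_of_pos (by positivity)

lemma mlF_series {α lam t : ℝ} (ht : 0 < t) :
    mlF α lam t = ∑' k : ℕ, (-lam) ^ k / Gamma (k * α + α) * t ^ (k * α + α - 1) := by
  unfold mlF mittagLeffler
  rw [← tsum_mul_left]
  congr 1
  ext k
  rw [add_sub_assoc, ml_pw _ ht, mul_pow]
  ring

lemma mlF_summable {α lam t : ℝ} (hα : 0 < α) (ht : 0 < t) :
    Summable fun k : ℕ => ‖(-lam) ^ k / Gamma (k * α + α) * t ^ (k * α + α - 1)‖ := by
  refine ((ml_summable0 α hα hα (x := |lam| * t ^ α) (by positivity)).mul_left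
    (t ^ (α - 1))).congr fun k => ?_
  have := ml_gp hα k hα
  rw [add_sub_assoc, ml_pw _ ht, norm_mul, norm_div, norm_pow, norm_neg, Real.norm_eq_abs,
    Real.norm_of_nonneg this.le, Real.norm_of_nonneg (by positivity), mul_pow]
  ring

lemma mlF_volterra {α lam t : ℝ} (hα : 0 < α) (ht : 0 < t) :
    mlF α lam t = t ^ (α - 1) / Gamma α
      - lam / Gamma α * ∫ s in (0:ℝ)..t, (t - s) ^ (α - 1) * mlF α lam s := by
  have hg := Gamma_pos_of_pos hα
  have hc := ml_conv (fun k : ℕ => (-lam) ^ k / Gamma (k * α + α)) (fun k => k * α + α)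
    (fun _ => α) ht (fun k => by positivity) (fun _ => hα) (by
      refine ((ml_summable0 (2 * α) hα (by positivity) (x := |lam| * t ^ α)
        (by positivity)).mul_left (Gamma α * t ^ (2 * α - 1))).congr fun k => ?_
      have := ml_gp hα k hα
      rw [show (k : ℝ) * α + α + α = k * α + 2 * α by ring, add_sub_assoc, ml_pw _ ht,
        abs_div, abs_pow, abs_neg, abs_of_pos this, mul_pow]
      field_simp)
  have e1 : ∫ s in (0:ℝ)..t, (t - s) ^ (α - 1) * mlF α lam s
      = ∫ s in Ioo 0 t, ∑' k : ℕ, (-lam) ^ k / Gamma (k * α + α) *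
        (s ^ (k * α + α - 1) * (t - s) ^ (α - 1)) := by
    rw [intervalIntegral.integral_of_le ht.le, MeasureTheory.integral_Ioc_eq_integral_Ioo]
    refine setIntegral_congr_fun measurableSet_Ioo fun s hs => ?_
    rw [mlF_series hs.1, ← tsum_mul_left]
    congr 1
    ext k
    ring
  rw [e1, hc]
  unfold mlF mittagLeffler
  have hsum : Summable (fun k : ℕ => (-lam * t ^ α) ^ k / Gamma (k * α + α)) := by
    refine Summable.of_norm ((ml_summable0 α hα hα (x := |-lam * t ^ α|) (abs_nonneg _)).congr
      fun k => ?_)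
    simp [abs_of_pos (ml_gp hα k hα), abs_mul, mul_pow]
  rw [hsum.tsum_eq_zero_add, mul_add, sub_eq_add_neg]
  congr 1
  · simp; ring
  · rw [← neg_mul, ← tsum_mul_left, ← tsum_mul_left]
    congr 1
    ext k
    have := ml_gp hα k hα
    rw [show (k : ℝ) * α + α + α = k * α + 2 * α by ring,
      show ((k + 1 : ℕ) : ℝ) * α + α = k * α + 2 * α by push_cast; ring,
      add_sub_assoc, ml_pw _ ht,
      show 2 * α - 1 = (α - 1) + α by ring, Real.rpow_add ht (α - 1) α, pow_succ, mul_pow]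
    have := ml_gp hα k (β := 2 * α) (by positivity)
    generalize t ^ (α - 1) = P
    generalize t ^ α = Q
    field_simp

lemma ml_antidiag (g : ℕ → ℝ) (hg : Summable fun n : ℕ => ((n : ℝ) + 1) * |g n|) :
    Summable (fun p : ℕ × ℕ => |g (p.1 + p.2)|) ∧
    ∑' p : ℕ × ℕ, g (p.1 + p.2) = ∑' n : ℕ, ((n : ℝ) + 1) * g n := by
  have key : ∀ (h : ℕ → ℝ) (n : ℕ), ∑' (c : Finset.HasAntidiagonal.antidiagonal n), h (c.1.1 + c.1.2)
      = ((n : ℝ) + 1) * h n := by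
    intro h n
    rw [Finset.tsum_subtype (Finset.HasAntidiagonal.antidiagonal n) (fun c => h (c.1 + c.2))]
    rw [Finset.sum_congr rfl (g := fun _ => h n)
      (fun c hc => by rw [Finset.HasAntidiagonal.mem_antidiagonal.1 hc])]
    simp
  have hs : Summable (fun p : ℕ × ℕ => |g (p.1 + p.2)|) := by
    rw [← Finset.HasAntidiagonal.sigmaAntidiagonalEquivProd.summable_iff]
    refine (summable_sigma_of_nonneg (fun _ => abs_nonneg _)).2 ?_
    refine ⟨fun n => (hasSum_fintype _).summable, hg.congr fun n => ?_⟩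
    exact (key (fun n => |g n|) n).symm
  refine ⟨hs, ?_⟩
  rw [← Finset.HasAntidiagonal.sigmaAntidiagonalEquivProd.tsum_eq]
  rw [Summable.tsum_sigma']
  · congr 1
    ext n
    exact key g n
  · exact fun n => (hasSum_fintype _).summable
  · exact (Finset.HasAntidiagonal.sigmaAntidiagonalEquivProd.summable_iff
      (f := fun p : ℕ × ℕ => g (p.1 + p.2))).2 hs.of_abs

lemma mlF_conv {α lam t : ℝ} (hα : 0 < α) (ht : 0 < t) :
    ∫ s in (0:ℝ)..t, mlF α lam s * mlF α lam (t - s) = t ^ (2 * α - 1) * mlD α lam t := by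
  set g : ℕ → ℝ := fun n => t ^ (2 * α - 1) * ((-lam * t ^ α) ^ n / Gamma (n * α + 2 * α)) with hgd
  obtain ⟨h1, h2⟩ := ml_antidiag g (by
    refine ((ml_summable1 (2 * α) hα (by positivity) (x := |lam| * t ^ α)
        (by positivity)).mul_left (t ^ (2 * α - 1))).congr fun k => ?_
    have := ml_gp hα k (β := 2 * α) (by positivity)
    have h3 : |t ^ α| = t ^ α := abs_of_pos (by positivity)
    have h4 : |t ^ (2 * α - 1)| = t ^ (2 * α - 1) := abs_of_pos (by positivity)
    simp only [g, abs_mul, abs_div, abs_pow, abs_neg, abs_of_pos this, h3, h4]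
    ring)
  have hterm : ∀ p : ℕ × ℕ, ∀ c : ℝ, c / (Gamma (p.1 * α + α) * Gamma (p.2 * α + α)) *
      (t ^ ((p.1 * α + α) + (p.2 * α + α) - 1) * (Gamma (p.1 * α + α) * Gamma (p.2 * α + α) /
        Gamma ((p.1 * α + α) + (p.2 * α + α)))) = t ^ (2 * α - 1) * (c * (t ^ α) ^ (p.1 + p.2) /
         Gamma ((p.1 + p.2 : ℕ) * α + 2 * α)) := by
    intro p c
    have := ml_gp hα p.1 hα
    have := ml_gp hα p.2 hα
    rw [show (p.1 : ℝ) * α + α + (p.2 * α + α) = (p.1 + p.2 : ℕ) * α + 2 * α by push_cast; ring,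
      add_sub_assoc, ml_pw _ ht]
    field_simp
  have hc := ml_conv (fun p : ℕ × ℕ => (-lam) ^ (p.1 + p.2) /
      (Gamma (p.1 * α + α) * Gamma (p.2 * α + α))) (fun p => p.1 * α + α)
    (fun p => p.2 * α + α) ht (fun k => by positivity) (fun _ => by positivity) (by
      refine h1.congr fun p => ?_
      have h5 := ml_gp hα p.1 hα
      have h6 := ml_gp hα p.2 hα
      have h7 := ml_gp hα (p.1 + p.2) (β := 2 * α) (by positivity)
      rw [abs_div, abs_of_pos (mul_pos h5 h6), hterm]
      have h3 : |t ^ α| = t ^ α := abs_of_pos (by positivity)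
      have h4 : |t ^ (2 * α - 1)| = t ^ (2 * α - 1) := abs_of_pos (by positivity)
      simp only [g, abs_mul, abs_div, abs_pow, abs_neg, abs_of_pos h7, h3, h4, mul_pow])
  have e1 : ∫ s in (0:ℝ)..t, mlF α lam s * mlF α lam (t - s)
      = ∫ s in Ioo 0 t, ∑' p : ℕ × ℕ, (-lam) ^ (p.1 + p.2) /
      (Gamma (p.1 * α + α) * Gamma (p.2 * α + α)) *
        (s ^ (p.1 * α + α - 1) * (t - s) ^ (p.2 * α + α - 1)) := by
    rw [intervalIntegral.integral_of_le ht.le, MeasureTheory.integral_Ioc_eq_integral_Ioo]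
    refine setIntegral_congr_fun measurableSet_Ioo fun s hs => ?_
    have hts : 0 < t - s := sub_pos.2 hs.2
    rw [mlF_series hs.1, mlF_series hts,
      tsum_mul_tsum_of_summable_norm (mlF_summable hα hs.1) (mlF_summable hα hts)]
    congr 1
    ext p
    rw [pow_add]
    have := ml_gp hα p.1 hα
    have := ml_gp hα p.2 hα
    field_simp
  rw [e1, hc, mlD, ← tsum_mul_left]
  rw [tsum_congr (fun p => hterm p _)]
  simp only [g] at h2
  simp only [mul_pow] at h2 ⊢
  rw [h2]
  congr 1
  ext n
  ring

lemma mlF_hasDerivAt {α lam t : ℝ} (hα : 0 < α) (ht : 0 < t) :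
    HasDerivAt (mlF α lam) (((α - 1) * mlF α lam t
      - α * lam * ∫ s in (0:ℝ)..t, mlF α lam s * mlF α lam (t - s)) / t) t := by
  have hE := ml_hasDerivAt hα (-lam * t ^ α)
  have hp : HasDerivAt (fun t : ℝ => -lam * t ^ α) (-lam * (α * t ^ (α - 1))) t :=
    (Real.hasDerivAt_rpow_const (Or.inl ht.ne')).const_mul _
  have hq : HasDerivAt (fun t : ℝ => t ^ (α - 1)) ((α - 1) * t ^ (α - 1 - 1)) t :=
    Real.hasDerivAt_rpow_const (Or.inl ht.ne')
  have h := hq.mul (hE.comp t hp)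
  have hD : (∑' k : ℕ, (k : ℝ) * (-lam * t ^ α) ^ (k - 1) / Gamma (k * α + α)) = mlD α lam t := by
    have hsum : Summable
        (fun k : ℕ => ((k + 1 : ℕ) : ℝ) * (-lam * t ^ α) ^ (k + 1 - 1) / Gamma ((k + 1 : ℕ) * α + α)) := by
      refine Summable.of_norm ((ml_summable1 (2 * α) hα (by positivity) (x := |-lam * t ^ α|)
        (abs_nonneg _)).congr fun k => ?_)
      have := ml_gp hα k (β := 2 * α) (by positivity)
      rw [show ((k + 1 : ℕ) : ℝ) * α + α = k * α + 2 * α by push_cast; ring]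
      rw [norm_div, norm_mul, norm_pow, Real.norm_of_nonneg this.le,
        Real.norm_of_nonneg (by positivity), Real.norm_eq_abs]
      simp
    rw [((summable_nat_add_iff (f := fun k : ℕ => (k : ℝ) * (-lam * t ^ α) ^ (k - 1) /
      Gamma (k * α + α)) 1).1 hsum).tsum_eq_zero_add, mlD]
    simp only [Nat.cast_zero, zero_mul, zero_div, zero_add]
    congr 1
    ext k
    rw [show ((k + 1 : ℕ) : ℝ) * α + α = k * α + 2 * α by push_cast; ring]
    simp
  rw [hD] at h
  rw [mlF_conv hα ht]
  convert! h using 1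
  simp only [mlF, Function.comp]
  rw [show 2 * α - 1 = (α - 1) + (α - 1) + 1 by ring, Real.rpow_add ht, Real.rpow_add ht,
    Real.rpow_sub_one ht.ne' (α - 1), Real.rpow_one]
  generalize t ^ (α - 1) = P
  generalize t ^ α = Q
  field_simp
  ring

lemma ml_cont2 {α : ℝ} (lam : ℝ) (hα : 0 < α) :
    Continuous fun s : ℝ => mittagLeffler α α (-lam * s ^ α) :=
  (ml_continuous hα).comp (continuous_const.mul (Real.continuous_rpow_const hα.le))

lemma mlF_int1 {α t : ℝ} (lam : ℝ) (hα : 0 < α) (ht : 0 < t) :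
    IntervalIntegrable (fun s => (t - s) ^ (α - 1) * mlF α lam s) volume 0 t := by
  refine ((ml_beta_int hα hα ht).mul_continuousOn (ml_cont2 lam hα).continuousOn).congr ?_
  intro s _
  simp only [mlF]
  ring

lemma mlF_int2 {α t : ℝ} (lam : ℝ) (hα : 0 < α) :
    IntervalIntegrable (fun s => mlF α lam s) volume 0 t := 
  (intervalIntegrable_rpow' (by linarith)).mul_continuousOn (ml_cont2 lam hα).continuousOn

lemma mlF_int3 {α t : ℝ} (lam : ℝ) (hα : 0 < α) (ht : 0 < t) :
    IntervalIntegrable (fun s => mlF α lam s * mlF α lam (t - s)) volume 0 t := by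
  refine ((ml_beta_int hα hα ht).mul_continuousOn ((ml_cont2 lam hα).mul
    ((ml_cont2 lam hα).comp (continuous_const.sub continuous_id : Continuous fun s => t - s))).continuousOn).congr ?_
  intro s _
  simp only [mlF, Function.comp, Pi.mul_apply, Pi.sub_apply]
  ring

lemma mlF_contOn {α : ℝ} (lam : ℝ) (hα : 0 < α) : ContinuousOn (mlF α lam) (Ioi 0) :=
  fun _ ht => (mlF_hasDerivAt hα ht).continuousAt.continuousWithinAt

lemma mlF_pos_near {α : ℝ} (lam : ℝ) (hα : 0 < α) :
    ∃ ε > 0, ∀ t, 0 < t → t < ε → 0 < mlF α lam t := by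
  have h0 : 0 < mittagLeffler α α (-lam * (0:ℝ) ^ α) := by
    rw [Real.zero_rpow hα.ne', mul_zero, mittagLeffler, tsum_eq_single 0]
    · simpa using Gamma_pos_of_pos hα
    · intro k hk; simp [hk]
  have := (ml_cont2 lam hα).continuousAt.eventually (lt_mem_nhds h0)
  obtain ⟨ε, hε, h⟩ := Metric.eventually_nhds_iff.1 this
  refine ⟨ε, hε, fun t ht hte => ?_⟩
  have := h (y := t) (by simpa [abs_of_pos ht] using hte)
  unfold mlF
  positivity

lemma mlF_pos {α lam t : ℝ} (hα : 0 < α) (hα1 : α < 1) (hl : 0 < lam) (ht : 0 < t) :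
    0 < mlF α lam t := by
  by_contra! hneg
  obtain ⟨ε, hε, hnear⟩ := mlF_pos_near lam hα
  set S : Set ℝ := {r | ε ≤ r ∧ mlF α lam r ≤ 0} with hS
  have htS : t ∈ S := by
    refine ⟨?_, hneg⟩
    by_contra! h
    exact absurd (hnear t ht h) (not_lt.2 hneg)
  have hbdd : BddBelow S := ⟨ε, fun r hr => hr.1⟩
  have hclosed : IsClosed S := by
    have : S = Ici ε ∩ mlF α lam ⁻¹' Iic 0 := by ext r; simp [hS]
    rw [this]
    exact ((mlF_contOn lam hα).mono (fun r hr => lt_of_lt_of_le hε hr)).preimage_isClosed_of_isClosed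
      isClosed_Ici isClosed_Iic
  set T := sInf S
  obtain ⟨hTε, hT0⟩ : T ∈ S := hclosed.csInf_mem ⟨t, htS⟩ hbdd
  have hTp : 0 < T := hε.trans_le hTε
  have hpos : ∀ r, 0 < r → r < T → 0 < mlF α lam r := by
    intro r hr hrT
    by_contra! h
    have : r ∈ S := ⟨by by_contra! h2; exact absurd (hnear r hr h2) (not_lt.2 h), h⟩
    exact absurd (csInf_le hbdd this) (not_le.2 hrT)
  have hg := Gamma_pos_of_pos hα
  set L := lam / Gamma α with hL
  have hLp : 0 < L := by positivity
  -- choose the width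
  obtain ⟨δ, hδ, hδT, hδs⟩ : ∃ δ > 0, δ ≤ T / 2 ∧ L * (δ ^ α / α) < 1 / 2 := by
    have hc : Filter.Tendsto (fun d : ℝ => L * (d ^ α / α)) (nhds 0) (nhds (L * ((0:ℝ) ^ α / α))) :=
      (continuous_const.mul ((Real.continuous_rpow_const hα.le).div_const α)).tendsto 0
    rw [Real.zero_rpow hα.ne', zero_div, mul_zero] at hc
    obtain ⟨e, he, h⟩ := Metric.eventually_nhds_iff.1
      (hc.eventually (gt_mem_nhds (by norm_num : (0:ℝ) < 1 / 2)))
    refine ⟨min (e / 2) (T / 2), by positivity, min_le_right _ _, h ?_⟩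
    have h1 : 0 < min (e / 2) (T / 2) := by positivity
    have h2 := min_le_left (e / 2) (T / 2)
    rw [Real.dist_eq, sub_zero, abs_of_pos h1]
    linarith
  obtain ⟨a, ha, hmax⟩ := (isCompact_Icc (a := T - δ) (b := T)).exists_isMaxOn
    ⟨T, by constructor <;> linarith⟩
    ((mlF_contOn lam hα).mono (fun r hr => by have := hr.1; simp only [mem_Ioi]; linarith))
  have ha0 : 0 < a := by linarith [ha.1]
  have hfa : 0 < mlF α lam a := by
    have h1 : T - δ ∈ Icc (T - δ) T := by constructor <;> linarith
    exact (hpos (T - δ) (by linarith) (by linarith)).trans_le (hmax h1)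
  have haT : a < T := by
    refine lt_of_le_of_ne ha.2 fun h => ?_
    rw [h] at hfa
    linarith
  set ρ := (T / a) ^ (α - 1) with hρ
  have hρ2 : 1 / 2 ≤ ρ := by
    have h1 : 1 ≤ T / a := (one_le_div ha0).2 ha.2
    calc (1:ℝ) / 2 ≤ (T / a)⁻¹ := by
          rw [inv_div, div_le_div_iff₀ two_pos hTp]; linarith [ha.1]
      _ = (T / a) ^ (-1 : ℝ) := by rw [Real.rpow_neg_one]
      _ ≤ ρ := Real.rpow_le_rpow_of_exponent_le h1 (by linarith)
  have hi := mlF_int1 lam hα hTp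
  have hi1 : IntervalIntegrable (fun s => (T - s) ^ (α - 1) * mlF α lam s) volume 0 a :=
    hi.mono_set (by rw [uIcc_of_le ha0.le, uIcc_of_le hTp.le]; exact Icc_subset_Icc_right ha.2)
  have hi2 : IntervalIntegrable (fun s => (T - s) ^ (α - 1) * mlF α lam s) volume a T :=
    hi.mono_set (by rw [uIcc_of_le ha.2, uIcc_of_le hTp.le]; exact Icc_subset_Icc_left ha0.le)
  have hA : ∫ s in (0:ℝ)..a, (T - s) ^ (α - 1) * mlF α lam s
      ≤ ρ * ∫ s in (0:ℝ)..a, (a - s) ^ (α - 1) * mlF α lam s := by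
    rw [← intervalIntegral.integral_const_mul]
    refine integral_mono_on_of_le_Ioo ha0.le hi1 ((mlF_int1 lam hα ha0).const_mul _) ?_
    intro s hs
    have hsF := hpos s hs.1 (hs.2.trans haT)
    have h1 : 0 < a - s := sub_pos.2 hs.2
    rw [← mul_assoc]
    refine mul_le_mul_of_nonneg_right ?_ hsF.le
    rw [hρ, ← Real.mul_rpow (by positivity) h1.le]
    refine Real.rpow_le_rpow_of_nonpos (by positivity) ?_ (by linarith)
    rw [div_mul_eq_mul_div, div_le_iff₀ ha0]
    nlinarith [hs.1]
  have hiK : IntervalIntegrable (fun s => (T - s) ^ (α - 1)) volume a T := by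
    have := (intervalIntegrable_rpow' (a := 0) (b := T - a) (r := α - 1) (by linarith)).comp_sub_left T
    simpa using this.symm
  have hB : ∫ s in a..T, (T - s) ^ (α - 1) * mlF α lam s
      ≤ (δ ^ α / α) * mlF α lam a := by
    calc ∫ s in a..T, (T - s) ^ (α - 1) * mlF α lam s
        ≤ ∫ s in a..T, (T - s) ^ (α - 1) * mlF α lam a := by
          refine integral_mono_on_of_le_Ioo ha.2 hi2 (hiK.mul_const _) ?_
          intro s hs
          have h1 : 0 < T - s := sub_pos.2 hs.2
          exact mul_le_mul_of_nonneg_left (hmax ⟨by linarith [ha.1, hs.1], hs.2.le⟩) (by positivity)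
      _ = ((T - a) ^ α / α) * mlF α lam a := by
          rw [intervalIntegral.integral_mul_const,
            intervalIntegral.integral_comp_sub_left (fun x => x ^ (α - 1)) T, sub_self,
            integral_rpow (Or.inl (by linarith))]
          simp [Real.zero_rpow hα.ne']
      _ ≤ _ := by
          have : T - a ≤ δ := by linarith [ha.1]
          have : 0 < T - a := sub_pos.2 haT
          gcongr
  have hVT := mlF_volterra (lam := lam) hα hTp
  have hVa := mlF_volterra (lam := lam) hα ha0
  rw [← integral_add_adjacent_intervals hi1 hi2] at hVT
  rw [← hL] at hVT hVa
  have hTk : T ^ (α - 1) / Gamma α = ρ * (a ^ (α - 1) / Gamma α) := by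
    rw [hρ, Real.div_rpow hTp.le ha0.le]
    have : 0 < a ^ (α - 1) := by positivity
    field_simp
  have h1 := mul_le_mul_of_nonneg_left (add_le_add hA hB) hLp.le
  have h2 : ρ * mlF α lam a - L * (δ ^ α / α) * mlF α lam a ≤ mlF α lam T := by
    rw [hVT, hTk]
    have : ρ * mlF α lam a = ρ * (a ^ (α - 1) / Gamma α) -
      L * (ρ * ∫ s in (0:ℝ)..a, (a - s) ^ (α - 1) * mlF α lam s) := by
      rw [hVa]; ring
    rw [this]
    linarith
  nlinarith

lemma mlF_le {α lam t : ℝ} (hα : 0 < α) (hα1 : α < 1) (hl : 0 < lam) (ht : 0 < t) :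
    mlF α lam t ≤ t ^ (α - 1) / Gamma α := by
  have hg := Gamma_pos_of_pos hα
  rw [mlF_volterra hα ht]
  have : 0 ≤ ∫ s in (0:ℝ)..t, (t - s) ^ (α - 1) * mlF α lam s := by
    rw [intervalIntegral.integral_of_le ht.le, MeasureTheory.integral_Ioc_eq_integral_Ioo]
    refine setIntegral_nonneg measurableSet_Ioo fun s hs => ?_
    have := mlF_pos hα hα1 hl hs.1
    have : 0 < t - s := sub_pos.2 hs.2
    positivity
  have : 0 ≤ lam / Gamma α * ∫ s in (0:ℝ)..t, (t - s) ^ (α - 1) * mlF α lam s := by positivity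
  linarith

lemma mlF_K_le {α lam t : ℝ} (hα : 0 < α) (hα1 : α < 1) (hl : 0 < lam) (ht : 0 < t) :
    lam * ∫ s in (0:ℝ)..t, (t - s) ^ (α - 1) * mlF α lam s ≤ t ^ (α - 1) := by
  have hg := Gamma_pos_of_pos hα
  have h := mlF_volterra (lam := lam) hα ht
  have hp := mlF_pos hα hα1 hl ht
  rw [h, div_mul_eq_mul_div, ← sub_div, lt_div_iff₀ hg] at hp
  linarith

lemma mlF_integral_le {α lam t : ℝ} (hα : 0 < α) (hα1 : α < 1) (hl : 0 < lam) (ht : 0 < t) :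
    lam * ∫ s in (0:ℝ)..t, mlF α lam s ≤ 1 := by
  have h := mlF_K_le hα hα1 hl ht
  have h2 : t ^ (α - 1) * ∫ s in (0:ℝ)..t, mlF α lam s
      ≤ ∫ s in (0:ℝ)..t, (t - s) ^ (α - 1) * mlF α lam s := by
    rw [← intervalIntegral.integral_const_mul]
    refine integral_mono_on_of_le_Ioo ht.le ((mlF_int2 lam hα).const_mul _) (mlF_int1 lam hα ht) ?_
    intro s hs
    have := mlF_pos hα hα1 hl hs.1
    refine mul_le_mul_of_nonneg_right ?_ this.le
    exact Real.rpow_le_rpow_of_nonpos (sub_pos.2 hs.2) (by linarith [hs.1]) (by linarith)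
  have hp : 0 < t ^ (α - 1) := by positivity
  have h3 := (mul_le_mul_of_nonneg_left h2 hl.le).trans h
  refine le_of_mul_le_mul_left ?_ hp
  linarith

lemma mlF_conv_nonneg {α lam t : ℝ} (hα : 0 < α) (hα1 : α < 1) (hl : 0 < lam) (ht : 0 < t) :
    0 ≤ ∫ s in (0:ℝ)..t, mlF α lam s * mlF α lam (t - s) := by
  rw [intervalIntegral.integral_of_le ht.le, MeasureTheory.integral_Ioc_eq_integral_Ioo]
  refine setIntegral_nonneg measurableSet_Ioo fun s hs => ?_
  exact mul_nonneg (mlF_pos hα hα1 hl hs.1).le (mlF_pos hα hα1 hl (sub_pos.2 hs.2)).le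

lemma mlF_anti {α lam : ℝ} (hα : 0 < α) (hα1 : α < 1) (hl : 0 < lam) :
    AntitoneOn (mlF α lam) (Ioi 0) := by
  refine antitoneOn_of_deriv_nonpos (convex_Ioi 0) (mlF_contOn lam hα) ?_ ?_
  · rw [interior_Ioi]
    exact fun t ht => (mlF_hasDerivAt hα ht).differentiableAt.differentiableWithinAt
  · rw [interior_Ioi]
    intro t ht
    have ht' : 0 < t := ht
    rw [(mlF_hasDerivAt hα ht').deriv]
    refine div_nonpos_of_nonpos_of_nonneg ?_ ht'.le
    have h1 := mlF_pos hα hα1 hl ht'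
    have h2 := mlF_conv_nonneg hα hα1 hl ht'
    have h3 : 0 ≤ α * lam * ∫ s in (0:ℝ)..t, mlF α lam s * mlF α lam (t - s) := by positivity
    nlinarith

lemma mlF_le2 {α lam t : ℝ} (hα : 0 < α) (hα1 : α < 1) (hl : 0 < lam) (ht : 0 < t) :
    mlF α lam t ≤ 1 / (lam * t) := by
  have h : t * mlF α lam t ≤ ∫ s in (0:ℝ)..t, mlF α lam s := by
    have e : t * mlF α lam t = ∫ s in (0:ℝ)..t, mlF α lam t := by simp
    rw [e]
    refine integral_mono_on_of_le_Ioo ht.le (by simp) (mlF_int2 lam hα) ?_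
    intro s hs
    exact mlF_anti hα hα1 hl hs.1 ht hs.2.le
  rw [le_div_iff₀ (by positivity)]
  have := mlF_integral_le hα hα1 hl ht
  nlinarith

lemma mlF_conv_le1 {α lam t : ℝ} (hα : 0 < α) (hα1 : α < 1) (hl : 0 < lam) (ht : 0 < t) :
    lam * ∫ s in (0:ℝ)..t, mlF α lam s * mlF α lam (t - s) ≤ t ^ (α - 1) / Gamma α := by
  have hg := Gamma_pos_of_pos hα
  have h : ∫ s in (0:ℝ)..t, mlF α lam s * mlF α lam (t - s)
      ≤ ∫ s in (0:ℝ)..t, (Gamma α)⁻¹ * ((t - s) ^ (α - 1) * mlF α lam s) := by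
    refine integral_mono_on_of_le_Ioo ht.le (mlF_int3 lam hα ht)
      ((mlF_int1 lam hα ht).const_mul _) ?_
    intro s hs
    have h1 := mlF_pos hα hα1 hl hs.1
    have h2 := mlF_le hα hα1 hl (sub_pos.2 hs.2)
    have := mul_le_mul_of_nonneg_left h2 h1.le
    refine this.trans (le_of_eq ?_)
    field_simp
  rw [intervalIntegral.integral_const_mul] at h
  have h2 := mlF_K_le hα hα1 hl ht
  calc _ ≤ lam * ((Gamma α)⁻¹ * ∫ s in (0:ℝ)..t, (t - s) ^ (α - 1) * mlF α lam s) := by gcongr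
    _ = (lam * ∫ s in (0:ℝ)..t, (t - s) ^ (α - 1) * mlF α lam s) / Gamma α := by ring
    _ ≤ _ := by gcongr

lemma mlF_conv_le2 {α lam t : ℝ} (hα : 0 < α) (hα1 : α < 1) (hl : 0 < lam) (ht : 0 < t) :
    lam * ∫ s in (0:ℝ)..t, mlF α lam s * mlF α lam (t - s) ≤ 4 / (lam * t) := by
  have hm := mlF_le2 hα hα1 hl (half_pos ht)
  have hmp := mlF_pos hα hα1 hl (half_pos ht)
  have hi2 := mlF_int2 (t := t) lam hα
  have hi2' : IntervalIntegrable (fun s => mlF α lam (t - s)) volume 0 t := by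
    simpa using (hi2.comp_sub_left t).symm
  have h : ∫ s in (0:ℝ)..t, mlF α lam s * mlF α lam (t - s)
      ≤ ∫ s in (0:ℝ)..t, mlF α lam (t / 2) * (mlF α lam s + mlF α lam (t - s)) := by
    refine integral_mono_on_of_le_Ioo ht.le (mlF_int3 lam hα ht)
      ((hi2.add hi2').const_mul _) ?_
    intro s hs
    have hts : 0 < t - s := sub_pos.2 hs.2
    have h1 := mlF_pos hα hα1 hl hs.1
    have h2 := mlF_pos hα hα1 hl hts
    rcases le_total s (t / 2) with h3 | h3
    · have h4 := mlF_anti hα hα1 hl (half_pos ht) hts (by linarith : t / 2 ≤ t - s)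
      nlinarith
    · have h4 := mlF_anti hα hα1 hl (half_pos ht) hs.1 h3
      nlinarith
  rw [intervalIntegral.integral_const_mul, intervalIntegral.integral_add hi2 hi2',
    intervalIntegral.integral_comp_sub_left (fun x => mlF α lam x) t, sub_self, sub_zero] at h
  have hI := mlF_integral_le hα hα1 hl ht
  calc _ ≤ lam * (mlF α lam (t / 2) * ((∫ s in (0:ℝ)..t, mlF α lam s) +
        ∫ s in (0:ℝ)..t, mlF α lam s)) := by gcongr
    _ = mlF α lam (t / 2) * (2 * (lam * ∫ s in (0:ℝ)..t, mlF α lam s)) := by ring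
    _ ≤ mlF α lam (t / 2) * (2 * 1) := by gcongr
    _ ≤ 1 / (lam * (t / 2)) * (2 * 1) := by gcongr
    _ = _ := by field_simp; norm_num

lemma mlF_deriv_le {α lam t : ℝ} (hα : 0 < α) (hα1 : α < 1) (hl : 0 < lam) (ht : 0 < t) :
    ‖deriv (mlF α lam) t‖ ≤ (2 / Gamma α + 5) * (t ^ (α - 2) / (1 + lam * t ^ α)) := by
  have hg := Gamma_pos_of_pos hα
  rw [(mlF_hasDerivAt hα ht).deriv]
  set J := ∫ s in (0:ℝ)..t, mlF α lam s * mlF α lam (t - s)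
  have hJ0 : 0 ≤ J := mlF_conv_nonneg hα hα1 hl ht
  have hJ1 : lam * J ≤ t ^ (α - 1) / Gamma α := mlF_conv_le1 hα hα1 hl ht
  have hJ2 : lam * J ≤ 4 / (lam * t) := mlF_conv_le2 hα hα1 hl ht
  have hf0 := mlF_pos hα hα1 hl ht
  have hf1 := mlF_le hα hα1 hl ht
  have hf2 := mlF_le2 hα hα1 hl ht
  have hlJ : 0 ≤ lam * J := by positivity
  have hnum : |(α - 1) * mlF α lam t - α * lam * J| ≤ mlF α lam t + lam * J := by
    rw [abs_le]; constructor <;> nlinarith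
  rw [norm_div, Real.norm_of_nonneg ht.le, Real.norm_eq_abs, div_le_iff₀ ht]
  refine hnum.trans ?_
  have e : (2 / Gamma α + 5) * (t ^ (α - 2) / (1 + lam * t ^ α)) * t
      = (2 / Gamma α + 5) * t ^ (α - 1) / (1 + lam * t ^ α) := by
    rw [show α - 1 = (α - 2) + 1 by ring, Real.rpow_add ht, Real.rpow_one]
    ring
  have hta : 0 < t ^ α := by positivity
  rw [e, le_div_iff₀ (by positivity), mul_add, mul_one]
  have hX1 : mlF α lam t + lam * J ≤ 2 / Gamma α * t ^ (α - 1) := by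
    have : 2 / Gamma α * t ^ (α - 1) = t ^ (α - 1) / Gamma α + t ^ (α - 1) / Gamma α := by ring
    linarith
  have hX2 : (mlF α lam t + lam * J) * (lam * t ^ α) ≤ 5 * t ^ (α - 1) := by
    calc _ ≤ (1 / (lam * t) + 4 / (lam * t)) * (lam * t ^ α) := by gcongr
      _ = _ := by
        rw [Real.rpow_sub_one ht.ne']
        generalize t ^ α = Q
        field_simp
        ring
  linarith

theorem mittagLeffler_diff_bound (α : ℝ) (hα0 : 0 < α) (hα1 : α < 1) :
    ∃ C : ℝ, 0 < C ∧ ∀ lam : ℝ, 0 < lam → ∀ s t : ℝ, 0 < s → s < t →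
      |t ^ (α - 1) * mittagLeffler α α (-lam * t ^ α)
          - s ^ (α - 1) * mittagLeffler α α (-lam * s ^ α)|
        ≤ C * ∫ r in s..t, r ^ (α - 2) / (1 + lam * r ^ α) := by
  have hg := Gamma_pos_of_pos hα0
  refine ⟨2 / Gamma α + 5, by positivity, fun lam hl s t hs hst => ?_⟩
  rw [← intervalIntegral.integral_const_mul]
  refine norm_sub_le_integral_of_norm_deriv_le_of_le (f := mlF α lam) hst.le
    ((mlF_contOn lam hα0).mono fun r hr => hs.trans_le hr.1)
    (fun r hr => (mlF_hasDerivAt hα0 (hs.trans hr.1)).differentiableAt.differentiableWithinAt)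
    (Filter.Eventually.of_forall fun r hr => mlF_deriv_le hα0 hα1 hl (hs.trans hr.1)) ?_
  apply ContinuousOn.intervalIntegrable
  rw [uIcc_of_le hst.le]
  refine continuousOn_const.mul (ContinuousOn.div ?_ ?_ ?_)
  · exact fun r hr => (Real.continuousAt_rpow_const _ _
      (Or.inl (hs.trans_le hr.1).ne')).continuousWithinAt
  · exact (continuous_const.add (continuous_const.mul
      (Real.continuous_rpow_const hα0.le))).continuousOn
  · intro r hr
    have : 0 < r := hs.trans_le hr.1
    positivity
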